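/- arXiv:2203.10293 — 2 statements merged into one kernel-verified Lean document; each statement's English description precedes it below -/
import Mathlib

section
/- For every natural number n ≥ 1, setting m = n^{n·B·(B−1)} where B = binomial(2n,n), the following holds: for every partition P of [ω]^n and every Q ∈ P*, there is a set I ⊆ {0,…,n−1} such that for every infinite set X ⊆ ℕ with [X]^{2n} ⊆ Q there is a partition {R_0, R_1, …, R_m} of X such that (1) R_0 is finite of cardinality at most m, and (2) for every i with 1 ≤ i ≤ m, the set R_i is an infinite I-canonical set for P. -/
/-! Common definitions. -/

/-- The `i`-th smallest element of a finite set of naturals (default 0 if `i ≥ |s|`). -/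
def nth (s : Finset ℕ) (i : ℕ) : ℕ := (s.sort (· ≤ ·)).getD i 0

/-- `[ω]^n` : the set of `n`-element subsets of `ℕ` (as `Finset`s). -/
def cube (n : ℕ) : Set (Finset ℕ) := {s | s.card = n}

/-- `P` is a partition of `Z` (one member may be empty). -/
def IsPartitionOn (Z : Set (Finset ℕ)) (P : Set (Set (Finset ℕ))) : Prop :=
  ⋃₀ P = Z ∧ ∀ A ∈ P, ∀ B ∈ P, A ∩ B = ∅ ∨ A = B

/-- The equivalence relation `≈_P` induced by a partition `P`. -/
def EquivP (P : Set (Set (Finset ℕ))) (p q : Finset ℕ) : Prop := ∃ A ∈ P, p ∈ A ∧ q ∈ A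

/-- `X` is `I`-canonical for a partition `P` of `[ω]^n`. -/
def ICanon (n : ℕ) (P : Set (Set (Finset ℕ))) (I : Set ℕ) (X : Set ℕ) : Prop :=
  ∀ p q : Finset ℕ, ↑p ⊆ X → p.card = n → ↑q ⊆ X → q.card = n →
    (EquivP P p q ↔ ∀ i ∈ I, nth p i = nth q i)

/-- `X` is canonical for a partition `P` of `[ω]^n`. -/
def Canon (n : ℕ) (P : Set (Set (Finset ℕ))) (X : Set ℕ) : Prop :=
  ∃ I : Set ℕ, I ⊆ Set.Iio n ∧ ICanon n P I X

/-- `X` is homogeneous for a partition `P` of `[ω]^n`. -/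
def Homog (n : ℕ) (P : Set (Set (Finset ℕ))) (X : Set ℕ) : Prop :=
  ∃ A ∈ P, ∀ s : Finset ℕ, ↑s ⊆ X → s.card = n → s ∈ A

/-- `[2n]^n` : the `n`-element subsets of `{0, …, 2n-1}`. -/
def idx (n : ℕ) : Finset (Finset ℕ) := Finset.powersetCard n (Finset.range (2 * n))

/-- The set `Q_{pq} = { z ∈ [ω]^{2n} : {z_[i] : i ∈ p} ≈_P {z_[i] : i ∈ q} }`. -/
def Qpq (n : ℕ) (P : Set (Set (Finset ℕ))) (p q : Finset ℕ) : Set (Finset ℕ) :=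
  {z | z.card = 2 * n ∧ EquivP P (p.image (nth z)) (q.image (nth z))}

/-- `P*` : the atoms of the field of subsets of `[ω]^{2n}` generated by the sets `Q_{pq}`. -/
def Atoms (n : ℕ) (P : Set (Set (Finset ℕ))) : Set (Set (Finset ℕ)) :=
  {Q | Q.Nonempty ∧ ∃ S : Finset ℕ → Finset ℕ → Set (Finset ℕ),
    (∀ p ∈ idx n, ∀ q ∈ idx n, S p q = Qpq n P p q ∨ S p q = cube (2 * n) \ Qpq n P p q) ∧
    Q = ⋂ p ∈ idx n, ⋂ q ∈ idx n, S p q}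

/-- `I_{pq} = { i < n : p_[i] = q_[i] }`. -/
def Ipq (n : ℕ) (p q : Finset ℕ) : Set ℕ := {i | i < n ∧ nth p i = nth q i}

/-- `I(Q) = ⋂ { I_{pq} : p, q ∈ [2n]^n, Q ⊆ Q_{pq} }`. -/
def IofQ (n : ℕ) (P : Set (Set (Finset ℕ))) (Q : Set (Finset ℕ)) : Set ℕ :=
  ⋂ p ∈ idx n, ⋂ q ∈ idx n, ⋂ (_ : Q ⊆ Qpq n P p q), Ipq n p q

/-- `ρ(a,b) = |(a △ b) ∩ X|`, identifying `a` with `{0, …, a-1}`. -/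
noncomputable def rho (X : Set ℕ) (a b : ℕ) : ℕ := (X ∩ Set.Ico (min a b) (max a b)).ncard

/-- The sparsity `d(x) = min { ρ(a,b) : a, b ∈ x ∪ {e}, a ≠ b }` (with `d(∅) = ⊤ = ω`). -/
noncomputable def sparsity (X : Set ℕ) (e : ℕ) (x : Finset ℕ) : ℕ∞ :=
  ⨅ a ∈ (x ∪ {e} : Finset ℕ), ⨅ b ∈ (x ∪ {e} : Finset ℕ), ⨅ _ : a ≠ b, (rho X a b : ℕ∞)

/-- `r(x,y) = max_{b ∈ y} min { ρ(a,b) : a ∈ x ∪ {e}, a ≤ b }`. -/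
noncomputable def rfun (X : Set ℕ) (e : ℕ) (x y : Finset ℕ) : ℕ :=
  y.sup fun b => sInf ((fun a => rho X a b) '' {a : ℕ | a ∈ (x ∪ {e} : Finset ℕ) ∧ a ≤ b})

/-- `x →_{pq} y` : there is `z ∈ [X]^{2n}` with `{z_[i] : i ∈ p} = x` and `{z_[i] : i ∈ q} = y`. -/
def Arrow (X : Set ℕ) (n : ℕ) (p q x y : Finset ℕ) : Prop :=
  ∃ z : Finset ℕ, ↑z ⊆ X ∧ z.card = 2 * n ∧ p.image (nth z) = x ∧ q.image (nth z) = y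

/-- `x ↔_Q y` : `x →_{pq} y` for some `p, q ∈ [2n]^n` with `Q ⊆ Q_{pq}`. -/
def RelQ (n : ℕ) (P : Set (Set (Finset ℕ))) (Q : Set (Finset ℕ)) (X : Set ℕ)
    (x y : Finset ℕ) : Prop :=
  ∃ p ∈ idx n, ∃ q ∈ idx n, Q ⊆ Qpq n P p q ∧ Arrow X n p q x y

/-- `x_0, …, x_l` is a `t`-cascade. -/
def IsCascade (n : ℕ) (P : Set (Set (Finset ℕ))) (Q : Set (Finset ℕ)) (X : Set ℕ) (e : ℕ)
    (t l : ℕ) (x : ℕ → Finset ℕ) : Prop :=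
  (∀ i ≤ l, ↑(x i) ⊆ X \ {e} ∧ (x i).card = n) ∧
  ∀ i < l, ((n ^ (t - 2 * i) : ℕ) : ℕ∞) ≤ sparsity X e (x i) ∧
    rfun X e (x i) (x (i + 1)) ≤ n ^ (t - 2 * i - 1) ∧
    RelQ n P Q X (x i) (x (i + 1))

/-- The `n`-fold Fubini power `u ⊗ ⋯ ⊗ u` of an ultrafilter on `ℕ`, as an
ultrafilter on `Fin n → ℕ`. -/
noncomputable def tensorPow (u : Ultrafilter ℕ) : (n : ℕ) → Ultrafilter (Fin n → ℕ)
  | 0 => pure (fun i => i.elim0)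
  | n + 1 => u.bind fun a => (tensorPow u n).map (Fin.cons a)

/-- The diagonal ultrafilter extension `f̃(u, u, …, u)` of `f : ℕ^n → ℕ`. -/
noncomputable def diagExt {n : ℕ} (f : (Fin n → ℕ) → ℕ) (u : Ultrafilter ℕ) : Ultrafilter ℕ :=
  (tensorPow u n).map f

/-- The Rudin–Keisler preorder. -/
def RKle (u v : Ultrafilter ℕ) : Prop := ∃ h : ℕ → ℕ, v.map h = u

/-- Rudin–Keisler equivalence. -/
def RKeq (u v : Ultrafilter ℕ) : Prop := RKle u v ∧ RKle v u

/-- `u` is nonprincipal: it contains no finite set. -/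
def Nonprincipal (u : Ultrafilter ℕ) : Prop := ∀ S : Set ℕ, S.Finite → S ∉ u

/-- `u` is a Ramsey ultrafilter. -/
def IsRamseyU (u : Ultrafilter ℕ) : Prop :=
  Nonprincipal u ∧ ∀ n : ℕ, 1 ≤ n → ∀ P : Set (Set (Finset ℕ)),
    IsPartitionOn (cube n) P → P.Finite → ∃ X ∈ u, Homog n P X

/-- `f : ℕ^n → ℕ` is selectively upward injective on `X` w.r.t. the index set `I`
(`I = ∅` gives "upward constant"). -/
def SelUpInjWrt (n : ℕ) (f : (Fin n → ℕ) → ℕ) (X : Set ℕ) (I : Set (Fin n)) : Prop :=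
  ∀ x y : Fin n → ℕ, (∀ i, x i ∈ X) → (∀ i, y i ∈ X) → StrictMono x → StrictMono y →
    (f x = f y ↔ ∀ i ∈ I, x i = y i)

/-!
Index the elements of `X` increasingly. Since all of `[X]^{2n}` lies in one atom `Q`, whether two
increasing `n`-tuples are related by `≈_P` depends only on their relative order. Call a coordinate
inessential if two related tuples differ there. An inessential coordinate can be moved freely:
given related `x`, `y` with `x i < y i`, either `x i` is not an entry of `y`, or `x i = y l` with
`l < i`, and then `x l < y l`, so `l` is inessential and by induction `y l` can be moved off `x i`;
now `x` can be compared through `y` with a copy of itself in which only the entry `i` has moved.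
Hence two tuples are related iff they agree on the essential coordinates, which form `I(Q)`. So `X`
itself is `I(Q)`-canonical; one takes `R_0 = ∅` and splits `X` into infinite sets arbitrarily.
-/

section OrderTypes

variable {ι α β : Type*}

/-- The families `f` and `g` enumerate their values in the same relative order. For pairs of tuples
`x, y` and `x', y'` this notion is applied to `Sum.elim x y` and `Sum.elim x' y'`. -/
def SameOrderType [LT α] [LT β] (f : ι → α) (g : ι → β) : Prop :=
  ∀ i j, f i < f j ↔ g i < g j

/-- The position of `f i` in the increasing enumeration, starting at `0`, of the range of `f`. -/
noncomputable def rank [Preorder α] (f : ι → α) (i : ι) : ℕ :=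
  (Set.range f ∩ Set.Iio (f i)).ncard

lemma SameOrderType.sumElim [LinearOrder ι] [LinearOrder α] [LinearOrder β] {x y : ι ↪o α}
    {x' y' : ι ↪o β} (h : ∀ i j, (x i < y j ↔ x' i < y' j) ∧ (y j < x i ↔ y' j < x' i)) :
    SameOrderType (Sum.elim x y) (Sum.elim x' y') := by
  rintro (i | i) (j | j)
  · simp only [Sum.elim_inl, OrderEmbedding.lt_iff_lt]
  · exact (h i j).1
  · exact (h j i).2
  · simp only [Sum.elim_inr, OrderEmbedding.lt_iff_lt]

lemma SameOrderType.eq_iff_eq [LinearOrder α] [LinearOrder β] {f : ι → α} {g : ι → β}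
    (h : SameOrderType f g) (i j : ι) : f i = f j ↔ g i = g j := by
  simp only [le_antisymm_iff, ← not_lt, h i j, h j i]

lemma SameOrderType.rank_eq [LinearOrder α] [LinearOrder β] {f : ι → α} {g : ι → β}
    (h : SameOrderType f g) : rank f = rank g := by
  funext i
  have : Nonempty β := ⟨g i⟩
  obtain ⟨φ, rfl⟩ := (Function.factorsThrough_iff g).1 fun j k ↦ (h.eq_iff_eq j k).1
  have himage : Set.range (φ ∘ f) ∩ Set.Iio (φ (f i)) = φ '' (Set.range f ∩ Set.Iio (f i)) := by
    ext b
    constructor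
    · rintro ⟨⟨j, rfl⟩, hj⟩
      exact ⟨f j, ⟨⟨j, rfl⟩, (h j i).2 hj⟩, rfl⟩
    · rintro ⟨_, ⟨⟨j, rfl⟩, hj⟩, rfl⟩
      exact ⟨⟨j, rfl⟩, (h j i).1 hj⟩
  have hinj : Set.InjOn φ (Set.range f ∩ Set.Iio (f i)) := by
    rintro _ ⟨⟨j, rfl⟩, -⟩ _ ⟨⟨k, rfl⟩, -⟩ hjk
    exact (h.eq_iff_eq j k).2 hjk
  rw [rank, rank, Function.comp_apply, himage, hinj.ncard_image]

lemma rank_lt_card [Fintype ι] [Preorder α] (f : ι → α) (i : ι) : rank f i < Fintype.card ι :=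
  calc
    rank f i < (Set.range f).ncard :=
      Set.ncard_lt_ncard ⟨Set.inter_subset_left, fun h ↦ lt_irrefl _ (h ⟨i, rfl⟩).2⟩
    _ ≤ Fintype.card ι := by
      simpa only [Set.image_univ, Set.ncard_univ, Nat.card_eq_fintype_card] using
        Set.ncard_image_le (f := f) (s := Set.univ)

lemma exists_orderEmbedding_rank_eq [Finite ι] (f : ι → ℕ) :
    ∃ g : ℕ ↪o ℕ, ∀ i, g (rank f i) = f i := by
  classical
  let A : ℕ → Prop := fun a ↦ a ∈ Set.range f ∨ ∀ j, f j < a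
  have hA : (Set.ofPred A).Infinite := by
    obtain ⟨M, hM⟩ := (Set.finite_range f).bddAbove
    exact (Set.Ioi_infinite M).mono fun a ha ↦ .inr fun j ↦ (hM ⟨j, rfl⟩).trans_lt ha
  have hcount (i : ι) : Nat.count A (f i) = rank f i := by
    rw [Nat.count_eq_card_filter_range, rank, ← Set.ncard_coe_finset]
    congr 1
    ext a
    simp only [Finset.coe_filter, Finset.mem_range, Set.mem_ofPred_eq, Set.mem_inter_iff,
      Set.mem_Iio, A]
    exact ⟨fun ⟨hlt, ha⟩ ↦ ⟨ha.resolve_right fun h ↦ (h i).asymm hlt, hlt⟩,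
      fun ⟨ha, hlt⟩ ↦ ⟨hlt, .inl ha⟩⟩
  refine ⟨.ofStrictMono (Nat.nth A) (Nat.nth_strictMono hA), fun i ↦ ?_⟩
  rw [OrderEmbedding.coe_ofStrictMono, ← hcount]
  exact Nat.nth_count (.inl ⟨i, rfl⟩)

lemma strictMono_rank_comp [Finite ι] {κ : Type*} [Preorder κ] {f : ι → ℕ} {k : κ → ι}
    (hfk : StrictMono (f ∘ k)) : StrictMono (rank f ∘ k) := fun i j hij ↦ by
  obtain ⟨g, hg⟩ := exists_orderEmbedding_rank_eq f
  rw [← g.lt_iff_lt, Function.comp_apply, Function.comp_apply, hg, hg]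
  exact hfk hij

end OrderTypes

section OrderInvariant

variable {ι : Type*} [LinearOrder ι]

/-- Whether two increasing tuples are related depends only on their relative order. -/
def IsOrderInvariant (r : Setoid (ι ↪o ℕ)) : Prop :=
  ∀ ⦃x y x' y' : ι ↪o ℕ⦄, SameOrderType (Sum.elim x y) (Sum.elim x' y') → r x y → r x' y'

/-- The coordinates on which any two related tuples agree. -/
def essential (r : Setoid (ι ↪o ℕ)) : Set ι :=
  {i | ∀ x y, r x y → x i = y i}

/-- The tuple `2 * x`, which leaves room for a new value above each of its entries. -/
def double (x : ι ↪o ℕ) : ι ↪o ℕ :=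
  .ofStrictMono (fun j ↦ 2 * x j) fun _ _ hjk ↦
    Nat.mul_lt_mul_of_pos_left (x.strictMono hjk) two_pos

/-- The tuple `2 * x` with its `i`-th entry increased by one. -/
def bump (i : ι) (x : ι ↪o ℕ) : ι ↪o ℕ :=
  .ofStrictMono (fun j ↦ 2 * x j + if j = i then 1 else 0) fun j k hjk ↦ by
    have := x.strictMono hjk
    dsimp only
    split_ifs <;> omega

@[simp]
lemma double_apply (x : ι ↪o ℕ) (j : ι) : double x j = 2 * x j := rfl

@[simp]
lemma bump_apply (i : ι) (x : ι ↪o ℕ) (j : ι) :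
    bump i x j = 2 * x j + if j = i then 1 else 0 := rfl

lemma exists_lower_entry {α : Type*} [LinearOrder α] {x y : ι ↪o α} {k : ι}
    (hxy : ∀ j < k, x j = y j) :
    ∃ z : ι ↪o α, z k = min (x k) (y k) ∧ ∀ j ≠ k, z j = x j := by
  refine ⟨.ofStrictMono (Function.update x k (min (x k) (y k))) fun i j hij ↦ ?_,
    Function.update_self .., fun j hj ↦ Function.update_of_ne hj ..⟩
  rcases eq_or_ne i k with rfl | hi
  · rw [Function.update_self, Function.update_of_ne hij.ne']
    exact (min_le_left _ _).trans_lt (x.strictMono hij)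
  rw [Function.update_of_ne hi]
  rcases eq_or_ne j k with rfl | hj
  · rw [Function.update_self]
    exact lt_min (x.strictMono hij) (hxy i hij ▸ y.strictMono hij)
  · rw [Function.update_of_ne hj]
    exact x.strictMono hij

namespace IsOrderInvariant

variable {r : Setoid (ι ↪o ℕ)} (hr : IsOrderInvariant r) {i : ι}
include hr

lemma rel_double {x y : ι ↪o ℕ} (hxy : r x y) : r (double x) (double y) :=
  hr (.sumElim fun _ _ ↦ by simp only [double_apply]; omega) hxy

lemma rel_double_bump {x y : ι ↪o ℕ} (hxy : r x y) (hne : ∀ j, x i ≠ y j) :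
    r (double x) (bump i x) := by
  have hbump : r (bump i x) (double y) := by
    refine hr (.sumElim fun k j ↦ ?_) hxy
    have := hne j
    rw [bump_apply, double_apply]
    split_ifs with hk
    · subst hk; omega
    · omega
  exact r.trans (hr.rel_double hxy) (r.symm hbump)

lemma rel_of_rel_double_bump {x : ι ↪o ℕ} (hx : r (double x) (bump i x)) {u v : ι ↪o ℕ}
    (huv : ∀ j ≠ i, u j = v j) : r u v := by
  wlog hlt : u i < v i generalizing u v
  · rcases (not_lt.1 hlt).lt_or_eq with hgt | heq
    · exact r.symm (this (fun j hj ↦ (huv j hj).symm) hgt)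
    · obtain rfl : u = v := by
        ext j
        by_cases hj : j = i
        · rw [hj, heq]
        · exact huv j hj
      exact r.refl u
  refine hr (.sumElim fun k j ↦ ?_) hx
  by_cases hj : j = i
  · subst hj
    by_cases hkj : k = j
    · subst hkj
      simp only [double_apply, bump_apply, if_true]
      omega
    · have hne := x.injective.ne hkj
      rw [huv k hkj, v.lt_iff_lt, v.lt_iff_lt, ← x.lt_iff_lt, ← x.lt_iff_lt, double_apply,
        bump_apply, if_pos rfl]
      omega
  · rw [← huv j hj, u.lt_iff_lt, u.lt_iff_lt, ← x.lt_iff_lt, ← x.lt_iff_lt, double_apply,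
      bump_apply, if_neg hj]
    omega

lemma exists_rel_forall_ne (hi : i ∉ essential r)
    (ih : ∀ l < i, l ∉ essential r → ∀ u v : ι ↪o ℕ, (∀ j ≠ l, u j = v j) → r u v) :
    ∃ x y, r x y ∧ ∀ j, x i ≠ y j := by
  obtain ⟨x, y, hxy, hlt⟩ : ∃ x y, r x y ∧ x i < y i := by
    simp only [essential, Set.mem_ofPred_eq, not_forall] at hi
    obtain ⟨x, y, hxy, hne⟩ := hi
    rcases Ne.lt_or_gt hne with hlt | hgt
    · exact ⟨x, y, hxy, hlt⟩
    · exact ⟨y, x, r.symm hxy, hgt⟩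
  by_cases hcoll : ∃ l, x i = y l
  · obtain ⟨l, hl⟩ := hcoll
    have hli : l < i := y.lt_iff_lt.1 (hl ▸ hlt)
    have hless : l ∉ essential r := fun h ↦ (hl ▸ x.strictMono hli).ne (h x y hxy)
    have hbump : r (double y) (bump l y) :=
      ih l hli hless _ _ fun j hj ↦ by rw [double_apply, bump_apply, if_neg hj, add_zero]
    refine ⟨double x, bump l y, r.trans (hr.rel_double hxy) hbump, fun j heq ↦ ?_⟩
    rw [double_apply, bump_apply] at heq
    split_ifs at heq with hj
    · omega
    · exact hj (y.injective (by omega))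
  · exact ⟨x, y, hxy, not_exists.1 hcoll⟩

lemma rel_of_eq_off_inessential [WellFoundedLT ι] (hi : i ∉ essential r) {u v : ι ↪o ℕ}
    (huv : ∀ j ≠ i, u j = v j) : r u v := by
  induction i using WellFoundedLT.induction generalizing u v with
  | _ i ih =>
    obtain ⟨x, y, hxy, hne⟩ := hr.exists_rel_forall_ne hi fun l hl hl' _ _ ↦ ih l hl hl'
    exact hr.rel_of_rel_double_bump (hr.rel_double_bump hxy hne) huv

lemma rel_of_eqOn_essential [Finite ι] {x y : ι ↪o ℕ} (hxy : Set.EqOn x y (essential r)) :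
    r x y := by
  induction hD : {j | x j ≠ y j} using WellFoundedLT.induction generalizing x y with
  | _ D ih =>
    subst hD
    rcases Set.eq_empty_or_nonempty {j | x j ≠ y j} with hempty | hnonempty
    · obtain rfl : x = y := by
        ext j
        by_contra hj
        exact hempty.le hj
      exact r.refl x
    obtain ⟨k, hk, hmin⟩ := WellFounded.has_min wellFounded_lt _ hnonempty
    have hbelow (j : ι) (hj : j < k) : x j = y j := not_not.1 fun hne ↦ hmin j hne hj
    obtain ⟨x', hx'k, hx'⟩ := exists_lower_entry hbelow
    obtain ⟨y', hy'k, hy'⟩ := exists_lower_entry fun j hj ↦ (hbelow j hj).symm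
    have hk_inessential : k ∉ essential r := fun h ↦ hk (hxy h)
    have hagree (j : ι) (hj : x j = y j) : x' j = y' j := by
      have hjk : j ≠ k := fun h ↦ hk (h ▸ hj)
      rw [hx' j hjk, hy' j hjk, hj]
    have hfewer : {j | x' j ≠ y' j} < {j | x j ≠ y j} :=
      (Set.ssubset_iff_of_subset fun j ↦ mt (hagree j)).2
        ⟨k, hk, not_not.2 (by rw [hx'k, hy'k, min_comm])⟩
    calc
      r x x' := hr.rel_of_eq_off_inessential hk_inessential fun j hj ↦ (hx' j hj).symm
      r x' y' := ih _ hfewer (fun j hj ↦ hagree j (hxy hj)) rfl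
      r y' y := hr.rel_of_eq_off_inessential hk_inessential hy'

lemma rel_iff_eqOn_essential [Finite ι] {x y : ι ↪o ℕ} :
    r x y ↔ Set.EqOn x y (essential r) :=
  ⟨fun hxy _ hi ↦ hi x y hxy, hr.rel_of_eqOn_essential⟩

end IsOrderInvariant

end OrderInvariant

section Subsets

variable {m n : ℕ}

lemma nth_eq_getElem {s : Finset ℕ} {i : ℕ} (hi : i < s.card) :
    nth s i = s.sort[i]'(by rwa [Finset.length_sort]) :=
  List.getD_eq_getElem ..

lemma injOn_nth (s : Finset ℕ) : Set.InjOn (nth s) (Set.Iio s.card) := fun i hi j hj hij ↦ by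
  rw [nth_eq_getElem hi, nth_eq_getElem hj] at hij
  exact (s.sort_nodup _).getElem_inj_iff.1 hij

lemma nth_image_univ {x : Fin n → ℕ} (hx : StrictMono x) (i : Fin n) :
    nth (Finset.univ.image x) i = x i := by
  have hcard : (Finset.univ.image x).card = n := by
    rw [Finset.card_image_of_injective _ hx.injective, Finset.card_fin]
  have hemb : x = (Finset.univ.image x).orderEmbOfFin hcard :=
    Finset.orderEmbOfFin_unique hcard (fun i ↦ Finset.mem_image_of_mem x (Finset.mem_univ i)) hx
  rw [nth_eq_getElem (hcard.symm ▸ i.2), congrFun hemb i, Finset.orderEmbOfFin_apply]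
  rfl

lemma nth_image_range {g : ℕ → ℕ} (hg : StrictMono g) {k : ℕ} (hk : k < m) :
    nth ((Finset.range m).image g) k = g k := by
  have himage : (Finset.range m).image g = Finset.univ.image (g ∘ Fin.val (n := m)) := by
    ext a
    simp only [Finset.mem_image, Finset.mem_range, Finset.mem_univ, true_and, Fin.exists_iff,
      Function.comp_apply, exists_prop]
  rw [himage]
  exact nth_image_univ (hg.comp Fin.val_strictMono) ⟨k, hk⟩

lemma exists_image_eq {s : Finset ℕ} (hs : s.card = n) :
    ∃ x : Fin n ↪o ℕ, Finset.univ.image x = s :=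
  ⟨s.orderEmbOfFin hs, s.image_orderEmbOfFin_univ hs⟩

lemma exists_image_comp_eq {e : ℕ ↪o ℕ} {s : Finset ℕ} (hse : ↑s ⊆ Set.range e)
    (hs : s.card = n) : ∃ x : Fin n ↪o ℕ, Finset.univ.image (e ∘ x) = s := by
  rw [← Set.image_univ, Finset.subset_set_image_iff] at hse
  obtain ⟨t, -, rfl⟩ := hse
  obtain ⟨x, rfl⟩ := exists_image_eq ((Finset.card_image_of_injective t e.injective).symm.trans hs)
  exact ⟨x, Finset.image_image.symm⟩

end Subsets

section Partition

variable {n : ℕ} {P : Set (Set (Finset ℕ))} {Q : Set (Finset ℕ)}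

/-- The equivalence relation `≈_P` on the set partitioned by `P`. -/
def IsPartitionOn.setoid {Z : Set (Finset ℕ)} (hP : IsPartitionOn Z P) : Setoid Z where
  r s t := EquivP P s t
  iseqv :=
    { refl := fun s ↦ by
        obtain ⟨A, hA, hs⟩ : (s : Finset ℕ) ∈ ⋃₀ P := hP.1.symm ▸ s.2
        exact ⟨A, hA, hs, hs⟩
      symm := fun ⟨A, hA, hs, ht⟩ ↦ ⟨A, hA, ht, hs⟩
      trans := by
        rintro s t u ⟨A, hA, hs, htA⟩ ⟨B, hB, htB, hu⟩
        rcases hP.2 A hA B hB with hdisj | rfl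
        · exact (hdisj.le ⟨htA, htB⟩).elim
        · exact ⟨A, hA, hs, hu⟩ }

/-- The relation `≈_P` on the subsets of the range of `e`, transported to the tuples of the indices
of their elements. -/
def IsPartitionOn.tupleSetoid (hP : IsPartitionOn (cube n) P) (e : ℕ ↪o ℕ) :
    Setoid (Fin n ↪o ℕ) :=
  hP.setoid.comap fun x ↦ ⟨Finset.univ.image (e ∘ x), by
    rw [cube, Set.mem_ofPred_eq, Finset.card_image_of_injective _ (e.injective.comp x.injective),
      Finset.card_fin]⟩

lemma image_rank_mem_idx {f : Fin n ⊕ Fin n → ℕ} {k : Fin n → Fin n ⊕ Fin n}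
    (hfk : StrictMono (f ∘ k)) : Finset.univ.image (rank f ∘ k) ∈ idx n := by
  refine Finset.mem_powersetCard.2 ⟨fun a ha ↦ ?_, ?_⟩
  · obtain ⟨i, -, rfl⟩ := Finset.mem_image.1 ha
    simpa [two_mul] using rank_lt_card f (k i)
  · rw [Finset.card_image_of_injective _ (strictMono_rank_comp hfk).injective, Finset.card_fin]

lemma range_mem_idx (n : ℕ) : Finset.range n ∈ idx n :=
  Finset.mem_powersetCard.2 ⟨Finset.range_subset_range.2 (by omega), Finset.card_range n⟩

lemma mem_IofQ {i : ℕ} :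
    i ∈ IofQ n P Q ↔ ∀ p ∈ idx n, ∀ q ∈ idx n, Q ⊆ Qpq n P p q → i ∈ Ipq n p q := by
  simp only [IofQ, Set.mem_iInter]

lemma card_of_mem_atoms (hQ : Q ∈ Atoms n P) {z : Finset ℕ} (hz : z ∈ Q) :
    z.card = 2 * n := by
  obtain ⟨-, S, hS, rfl⟩ := hQ
  have hidx := range_mem_idx n
  have hzS := Set.mem_iInter₂.1 (Set.mem_iInter₂.1 hz _ hidx) _ hidx
  rcases hS _ hidx _ hidx with h | h
  · exact (h ▸ hzS).1
  · exact (h ▸ hzS).1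

lemma subset_Qpq_of_mem_atoms (hQ : Q ∈ Atoms n P) {p q z : Finset ℕ} (hp : p ∈ idx n)
    (hq : q ∈ idx n) (hzQ : z ∈ Q) (hz : z ∈ Qpq n P p q) : Q ⊆ Qpq n P p q := by
  obtain ⟨-, S, hS, rfl⟩ := hQ
  intro w hw
  have hzS := Set.mem_iInter₂.1 (Set.mem_iInter₂.1 hzQ p hp) q hq
  have hwS := Set.mem_iInter₂.1 (Set.mem_iInter₂.1 hw p hp) q hq
  rcases hS p hp q hq with h | h
  · exact h ▸ hwS
  · exact absurd hz (h ▸ hzS).2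

lemma subset_Qpq_self (hP : IsPartitionOn (cube n) P) (hQ : Q ∈ Atoms n P) {p : Finset ℕ}
    (hp : p ∈ idx n) : Q ⊆ Qpq n P p p := fun z hz ↦ by
  have hz' := card_of_mem_atoms hQ hz
  obtain ⟨hprange, hpcard⟩ := Finset.mem_powersetCard.1 hp
  have hinj : Set.InjOn (nth z) p := (injOn_nth z).mono fun i hi ↦ by
    simpa only [hz', Set.mem_Iio, ← Finset.mem_range] using hprange hi
  exact ⟨hz', hP.setoid.refl ⟨p.image (nth z), (Finset.card_image_of_injOn hinj).trans hpcard⟩⟩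

lemma IofQ_subset_Iio (hP : IsPartitionOn (cube n) P) (hQ : Q ∈ Atoms n P) :
    IofQ n P Q ⊆ Set.Iio n := fun _ hi ↦
  (mem_IofQ.1 hi _ (range_mem_idx n) _ (range_mem_idx n)
    (subset_Qpq_self hP hQ (range_mem_idx n))).1

lemma image_range_mem_Qpq_iff (g : ℕ ↪o ℕ) {p q : Finset ℕ} (hp : p ∈ idx n) (hq : q ∈ idx n) :
    (Finset.range (2 * n)).image g ∈ Qpq n P p q ↔ EquivP P (p.image g) (q.image g) := by
  have himage {s : Finset ℕ} (hs : s ∈ idx n) :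
      s.image (nth ((Finset.range (2 * n)).image g)) = s.image g :=
    Finset.image_congr fun k hk ↦ nth_image_range g.strictMono
      (Finset.mem_range.1 ((Finset.mem_powersetCard.1 hs).1 hk))
  rw [Qpq, Set.mem_ofPred_eq, himage hp, himage hq, Finset.card_image_of_injective _ g.injective,
    Finset.card_range]
  exact and_iff_right rfl

end Partition

section Homogeneous

variable {n : ℕ} {P : Set (Set (Finset ℕ))} {Q : Set (Finset ℕ)} {e : ℕ ↪o ℕ}
  (hP : IsPartitionOn (cube n) P) (hQ : Q ∈ Atoms n P)
  (he : ∀ z : Finset ℕ, ↑z ⊆ Set.range e → z.card = 2 * n → z ∈ Q)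

include he in
lemma image_range_mem (g : ℕ ↪o ℕ) : (Finset.range (2 * n)).image (g.trans e) ∈ Q := by
  refine he _ ?_ ?_
  · rw [Finset.coe_image, RelEmbedding.coe_trans, Set.image_comp]
    exact Set.image_subset_range _ _
  · rw [Finset.card_image_of_injective _ (g.trans e).injective, Finset.card_range]

include hQ he in
lemma subset_Qpq_iff {p q : Finset ℕ} (hp : p ∈ idx n) (hq : q ∈ idx n) (g : ℕ ↪o ℕ) :
    Q ⊆ Qpq n P p q ↔ EquivP P (p.image (e ∘ g)) (q.image (e ∘ g)) := by
  rw [← RelEmbedding.coe_trans, ← image_range_mem_Qpq_iff _ hp hq]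
  exact ⟨fun h ↦ h (image_range_mem he g), subset_Qpq_of_mem_atoms hQ hp hq (image_range_mem he g)⟩

include hQ he in
lemma tupleSetoid_iff_subset_Qpq {x y : Fin n ↪o ℕ} :
    hP.tupleSetoid e x y ↔ Q ⊆ Qpq n P (Finset.univ.image (rank (Sum.elim x y) ∘ .inl))
      (Finset.univ.image (rank (Sum.elim x y) ∘ .inr)) := by
  obtain ⟨g, hg⟩ := exists_orderEmbedding_rank_eq (Sum.elim x y)
  have himage (k : Fin n → Fin n ⊕ Fin n) :
      (Finset.univ.image (rank (Sum.elim x y) ∘ k)).image (e ∘ g) =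
        Finset.univ.image (e ∘ (Sum.elim x y ∘ k)) := by
    rw [Finset.image_image]
    exact Finset.image_congr fun i _ ↦ congrArg e (hg (k i))
  have hp := image_rank_mem_idx (f := Sum.elim x y) (k := .inl) x.strictMono
  have hq := image_rank_mem_idx (f := Sum.elim x y) (k := .inr) y.strictMono
  rw [subset_Qpq_iff hQ he hp hq g, himage, himage]
  rfl

include hQ he in
lemma isOrderInvariant_tupleSetoid : IsOrderInvariant (hP.tupleSetoid e) := by
  intro x y x' y' h hxy
  rw [tupleSetoid_iff_subset_Qpq hP hQ he] at hxy ⊢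
  rwa [← h.rank_eq]

include hQ he in
lemma IofQ_eq_image_essential : IofQ n P Q = Fin.val '' essential (hP.tupleSetoid e) := by
  ext i
  constructor
  · intro hi
    have hin : i < n := IofQ_subset_Iio hP hQ hi
    refine ⟨⟨i, hin⟩, fun x y hxy ↦ ?_, rfl⟩
    obtain ⟨g, hg⟩ := exists_orderEmbedding_rank_eq (Sum.elim x y)
    have hx : StrictMono (Sum.elim x y ∘ Sum.inl) := x.strictMono
    have hy : StrictMono (Sum.elim x y ∘ Sum.inr) := y.strictMono
    have hnth := (mem_IofQ.1 hi _ (image_rank_mem_idx hx) _ (image_rank_mem_idx hy)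
      ((tupleSetoid_iff_subset_Qpq hP hQ he).1 hxy)).2
    have hrank : rank (Sum.elim x y) (.inl ⟨i, hin⟩) = rank (Sum.elim x y) (.inr ⟨i, hin⟩) := by
      rwa [nth_image_univ (strictMono_rank_comp hx) ⟨i, hin⟩,
        nth_image_univ (strictMono_rank_comp hy) ⟨i, hin⟩] at hnth
    exact (hg (.inl _)).symm.trans ((congrArg g hrank).trans (hg (.inr _)))
  · rintro ⟨i, hi, rfl⟩
    refine mem_IofQ.2 fun p hp q hq hpq ↦ ⟨i.2, ?_⟩
    have hpq' := (subset_Qpq_iff hQ he hp hq (RelEmbedding.refl _)).1 hpq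
    obtain ⟨x, rfl⟩ := exists_image_eq (Finset.mem_powersetCard.1 hp).2
    obtain ⟨y, rfl⟩ := exists_image_eq (Finset.mem_powersetCard.1 hq).2
    rw [nth_image_univ x.strictMono, nth_image_univ y.strictMono]
    rw [Finset.image_image, Finset.image_image] at hpq'
    exact hi x y hpq'

end Homogeneous

section Splitting

universe u v

open Cardinal in
lemma exists_infinite_fibers {α : Type u} {ι : Type v} [Infinite α] [Nonempty ι]
    (hια : lift.{u} #ι ≤ lift.{v} #α) : ∃ f : α → ι, ∀ i, (f ⁻¹' {i}).Infinite := by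
  obtain ⟨φ⟩ : Nonempty (α ≃ ι × α) := lift_mk_eq'.1 <| by
    rw [mk_prod, lift_mul, lift_lift, lift_lift, lift_umax.{u, v}]
    exact (Cardinal.mul_eq_right (aleph0_le_lift.2 (aleph0_le_mk α)) hια
      (lift_eq_zero.not.2 (mk_ne_zero ι))).symm
  refine ⟨fun a ↦ (φ a).1, fun i ↦ Set.infinite_of_injective_forall_mem (f := fun a ↦ φ.symm (i, a))
    (fun a b hab ↦ (Prod.ext_iff.1 (φ.symm.injective hab)).2) fun a ↦ ?_⟩
  simp

lemma exists_partition_infinite {α : Type*} {X : Set α} (hX : X.Infinite) {m : ℕ} (hm : 0 < m) :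
    ∃ R : Fin (m + 1) → Set α, (⋃ j, R j) = X ∧ (∀ j k, j ≠ k → R j ∩ R k = ∅) ∧
      R 0 = ∅ ∧ ∀ j ≠ 0, (R j).Infinite := by
  have : Infinite X := hX.to_subtype
  have : Nonempty (Fin m) := Fin.pos_iff_nonempty.1 hm
  obtain ⟨f, hf⟩ := exists_infinite_fibers (α := X) (ι := Fin m)
    ((Cardinal.lift_le_aleph0.2 Cardinal.mk_le_aleph0).trans
      (Cardinal.aleph0_le_lift.2 (Cardinal.aleph0_le_mk X)))
  let R (j : Fin (m + 1)) : Set α := Subtype.val '' ((Fin.succ ∘ f) ⁻¹' {j})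
  refine ⟨R, ?_, fun j k hjk ↦ ?_, ?_, fun j hj ↦ ?_⟩
  · rw [← Set.image_iUnion, ← Set.preimage_iUnion, Set.iUnion_of_singleton, Set.preimage_univ,
      Set.image_univ, Subtype.range_coe]
  · rw [← Set.image_inter Subtype.val_injective,
      (pairwise_disjoint_fiber (Fin.succ ∘ f) hjk).inter_eq, Set.image_empty]
  · exact Set.image_eq_empty.2 (Set.eq_empty_of_forall_notMem fun a ↦ Fin.succ_ne_zero (f a))
  · obtain ⟨k, rfl⟩ := Fin.exists_succ_eq.2 hj
    have hfiber : Fin.succ ∘ f ⁻¹' {k.succ} = f ⁻¹' {k} := by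
      ext a
      exact (Fin.succ_injective m).eq_iff
    exact (hfiber ▸ hf k).image Subtype.val_injective.injOn

lemma ICanon.mono {n : ℕ} {P : Set (Set (Finset ℕ))} {I X Y : Set ℕ} (hX : ICanon n P I X)
    (hYX : Y ⊆ X) : ICanon n P I Y := fun s t hs hs' ht ht' ↦
  hX s t (hs.trans hYX) hs' (ht.trans hYX) ht'

lemma ICanon.exists_partition {n : ℕ} {P : Set (Set (Finset ℕ))} {I X : Set ℕ}
    (hX : ICanon n P I X) (hXinf : X.Infinite) {m : ℕ} (hm : 0 < m) :
    ∃ R : Fin (m + 1) → Set ℕ, (⋃ j, R j) = X ∧ (∀ j k, j ≠ k → R j ∩ R k = ∅) ∧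
      (R 0).Finite ∧ (R 0).ncard ≤ m ∧ ∀ j ≠ 0, (R j).Infinite ∧ ICanon n P I (R j) := by
  obtain ⟨R, hunion, hdisj, hzero, hinf⟩ := exists_partition_infinite hXinf hm
  refine ⟨R, hunion, hdisj, hzero ▸ Set.finite_empty, ?_, fun j hj ↦
    ⟨hinf j hj, hX.mono (hunion ▸ Set.subset_iUnion R j)⟩⟩
  rw [hzero, Set.ncard_empty]
  exact hm.le

end Splitting

theorem stmt_2_general {n : ℕ} {P : Set (Set (Finset ℕ))} (hP : IsPartitionOn (cube n) P)
    {Q : Set (Finset ℕ)} (hQ : Q ∈ Atoms n P) {X : Set ℕ} (hXinf : X.Infinite)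
    (hX : ∀ z : Finset ℕ, ↑z ⊆ X → z.card = 2 * n → z ∈ Q) : ICanon n P (IofQ n P Q) X := by
  classical
  have := hXinf.to_subtype
  let e := Nat.orderEmbeddingOfSet X
  have hrange : Set.range e = X := Nat.orderEmbeddingOfSet_range X
  rw [← hrange] at hX ⊢
  intro s t hs hs' ht ht'
  obtain ⟨x, rfl⟩ := exists_image_comp_eq hs hs'
  obtain ⟨y, rfl⟩ := exists_image_comp_eq ht ht'
  have hnth (u : Fin n ↪o ℕ) (i : Fin n) : nth (Finset.univ.image (e ∘ u)) i = e (u i) :=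
    nth_image_univ (e.strictMono.comp u.strictMono) i
  change hP.tupleSetoid e x y ↔ _
  rw [(isOrderInvariant_tupleSetoid hP hQ hX).rel_iff_eqOn_essential,
    IofQ_eq_image_essential hP hQ hX, Set.forall_mem_image]
  simp only [hnth, e.injective.eq_iff]
  rfl

/-- with `m = n^{n·B·(B-1)}`, `B = C(2n,n)`, for every partition `P` of `[ω]^n`
and every `Q ∈ P*` there is `I ⊆ {0,…,n-1}` such that every infinite `X` with
`[X]^{2n} ⊆ Q` splits into a partition `{R_0, …, R_m}` with `R_0` finite of size `≤ m`
and each `R_i` (`1 ≤ i ≤ m`) an infinite `I`-canonical set for `P`. -/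
theorem stmt_2 (n : ℕ) (hn : 1 ≤ n) (m : ℕ)
    (hm : m = n ^ (n * Nat.choose (2 * n) n * (Nat.choose (2 * n) n - 1)))
    (P : Set (Set (Finset ℕ))) (hP : IsPartitionOn (cube n) P)
    (Q : Set (Finset ℕ)) (hQ : Q ∈ Atoms n P) :
    ∃ I : Set ℕ, I ⊆ Set.Iio n ∧
      ∀ X : Set ℕ, X.Infinite → (∀ z : Finset ℕ, ↑z ⊆ X → z.card = 2 * n → z ∈ Q) →
        ∃ R : Fin (m + 1) → Set ℕ,
          (⋃ j, R j) = X ∧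
          (∀ j k : Fin (m + 1), j ≠ k → R j ∩ R k = ∅) ∧
          (R 0).Finite ∧ (R 0).ncard ≤ m ∧
          ∀ j : Fin (m + 1), j ≠ 0 → (R j).Infinite ∧ ICanon n P I (R j) := by
  refine ⟨IofQ n P Q, IofQ_subset_Iio hP hQ, fun X hXinf hX ↦ ?_⟩
  exact (stmt_2_general hP hQ hXinf hX).exists_partition hXinf (hm ▸ Nat.pow_pos hn)
end

section
/- Let n ≥ 2 and let X ⊆ ℕ be infinite. For every natural number l ≥ 1, every set x ∈ [X⁻]^n with sparsity d(x) ≥ n^{2l}, and all p, q ∈ [2n]^n, there is a set y ∈ [X⁻]^n such that (1) d(y) ≥ n^{2l−2}, (2) r(x, y) ≤ n^{2l−1}, and (3) x →_{pq} y. -/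
/-!
Enumerating `X` increasingly identifies it with `ℕ` and `e` with `0`, and preserves `ρ`, `d`, `r`
and `→_{pq}`; so let `X = ℕ`, where `ρ(a,b) = |a - b|`. To find `z`, keep the elements of `x` at the
indices in `p`, and give every other index the position `D` above its predecessor. At most `n`
indices are outside `p`, so the elements inserted after a given element of `x⁺` stay within distance
`n * D` of it, and they do not come closer than `D` to the next element of `x` as soon as
`d(x) ≥ (n + 1) * D`. It remains to take `D = n ^ (2 * l - 2)`, since
`n + 1 ≤ n ^ 2`.
-/

section Nth

variable {s : Finset ℕ} {i j : ℕ}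

theorem nth_eq_orderEmbOfFin (hi : i < s.card) : nth s i = s.orderEmbOfFin rfl ⟨i, hi⟩ := by
  simp [nth, Finset.orderEmbOfFin_apply, hi]

theorem nth_mem (hi : i < s.card) : nth s i ∈ s :=
  nth_eq_orderEmbOfFin hi ▸ s.orderEmbOfFin_mem rfl _

theorem nth_lt_nth (hij : i < j) (hj : j < s.card) : nth s i < nth s j := by
  rw [nth_eq_orderEmbOfFin hj, nth_eq_orderEmbOfFin (hij.trans hj)]
  exact (s.orderEmbOfFin rfl).strictMono hij

theorem nth_zero_of_zero_mem (hs : 0 ∈ s) : nth s 0 = 0 := by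
  rw [nth_eq_orderEmbOfFin (Finset.card_pos.2 ⟨0, hs⟩), Finset.orderEmbOfFin_zero]
  exact Nat.le_zero.1 (s.min'_le 0 hs)

theorem nth_range (hi : i < j) : nth (Finset.range j) i = i := by
  simp [nth, hi]

theorem nth_image {f : ℕ → ℕ} (hf : StrictMono f) (hi : i < s.card) :
    nth (s.image f) i = f (nth s i) := by
  have hsort : (s.image f).sort = s.sort.map f := by
    let f' : ℕ ↪ ℕ := ⟨f, hf.injective⟩
    have hmap : s.map f' = s.image f := Finset.map_eq_image f' s
    exact hmap ▸ (StrictMonoOn.map_finsetSort f' s (hf.strictMonoOn s)).symm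
  simp [nth, hsort, hi]

theorem image_nth_succ_union_zero (hs : 0 ∉ s) :
    (Finset.range s.card).image (fun k => nth (s ∪ {0}) (k + 1)) = s := by
  have hcard : (s ∪ {0}).card = s.card + 1 := by
    rw [Finset.card_union_of_disjoint (Finset.disjoint_singleton_right.2 hs),
      Finset.card_singleton]
  refine Finset.eq_of_subset_of_card_le (Finset.image_subset_iff.2 fun k hk => ?_) ?_
  · have hk := Finset.mem_range.1 hk
    have hpos : nth (s ∪ {0}) 0 < nth (s ∪ {0}) (k + 1) := nth_lt_nth k.succ_pos (by omega)
    refine (Finset.mem_union.1 (nth_mem (by omega))).resolve_right fun h => ?_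
    exact (Nat.zero_le _).not_gt (Finset.mem_singleton.1 h ▸ hpos)
  · have hinj : StrictMonoOn (fun k => nth (s ∪ {0}) (k + 1)) (Finset.range s.card) :=
      fun i _ j hj hij => nth_lt_nth (Nat.succ_lt_succ hij)
        (by have := Finset.mem_range.1 hj; omega)
    rw [Finset.card_image_of_injOn hinj.injOn, Finset.card_range]

end Nth

section Arrow

variable {X Y : Set ℕ} {n : ℕ} {p q x y : Finset ℕ} {f : ℕ → ℕ}

theorem arrow_univ_self (hp : p ⊆ Finset.range (2 * n)) (hq : q ⊆ Finset.range (2 * n)) :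
    Arrow Set.univ n p q p q := by
  have image_nth_range {r : Finset ℕ} (hr : r ⊆ Finset.range (2 * n)) :
      r.image (nth (Finset.range (2 * n))) = r :=
    (Finset.image_congr fun i hi => nth_range (Finset.mem_range.1 (hr hi))).trans Finset.image_id
  exact ⟨Finset.range (2 * n), Set.subset_univ _, Finset.card_range _,
    image_nth_range hp, image_nth_range hq⟩

theorem Arrow.image (hf : StrictMono f) (hXY : Set.MapsTo f X Y)
    (hp : p ⊆ Finset.range (2 * n)) (hq : q ⊆ Finset.range (2 * n)) (h : Arrow X n p q x y) :
    Arrow Y n p q (x.image f) (y.image f) := by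
  obtain ⟨z, hzX, hz, rfl, rfl⟩ := h
  have image_nth {r : Finset ℕ} (hr : r ⊆ Finset.range (2 * n)) :
      r.image (nth (z.image f)) = (r.image (nth z)).image f := by
    rw [Finset.image_image]
    exact Finset.image_congr fun i hi => nth_image hf (hz ▸ Finset.mem_range.1 (hr hi))
  refine ⟨z.image f, ?_, ?_, image_nth hp, image_nth hq⟩
  · rw [Finset.coe_image]
    exact (hXY.mono_left hzX).image_subset
  · rw [Finset.card_image_of_injective _ hf.injective, hz]

end Arrow

section Rho

variable {E : ℕ → ℕ} {X : Set ℕ} {e i j r : ℕ} {s t x y : Finset ℕ}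

theorem rho_univ_of_le (h : i ≤ j) : rho Set.univ i j = j - i := by
  simp [rho, h, Set.ncard_eq_toFinset_card']

theorem rho_comm (X : Set ℕ) (i j : ℕ) : rho X i j = rho X j i := by
  rw [rho, rho, min_comm, max_comm]

theorem rho_range (hE : StrictMono E) (i j : ℕ) :
    rho (Set.range E) (E i) (E j) = rho Set.univ i j := by
  have hpre : E ⁻¹' Set.Ico (E (min i j)) (E (max i j)) = Set.Ico (min i j) (max i j) := by
    ext k
    simp only [Set.mem_preimage, Set.mem_Ico, hE.le_iff_le, hE.lt_iff_lt]
  rw [rho, rho, ← hE.monotone.map_min, ← hE.monotone.map_max, ← Set.image_preimage_eq_range_inter,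
    hpre, Set.ncard_image_of_injective _ hE.injective, Set.univ_inter]

theorem sparsity_range (hE : StrictMono E) (i : ℕ) (s : Finset ℕ) :
    sparsity (Set.range E) (E i) (s.image E) = sparsity Set.univ i s := by
  simp only [sparsity, ← Finset.image_singleton E i, ← Finset.image_union,
    Finset.iInf_finset_image, hE.injective.ne_iff, rho_range hE]

theorem rfun_range (hE : StrictMono E) (i : ℕ) (s t : Finset ℕ) :
    rfun (Set.range E) (E i) (s.image E) (t.image E) = rfun Set.univ i s t := by
  have hbelow (b : ℕ) : {a | a ∈ s.image E ∪ {E i} ∧ a ≤ E b} = E '' {a | a ∈ s ∪ {i} ∧ a ≤ b} := by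
    ext c
    rw [← Finset.image_singleton E i, ← Finset.image_union]
    constructor
    · rintro ⟨hc, hcb⟩
      obtain ⟨a, ha, rfl⟩ := Finset.mem_image.1 hc
      exact ⟨a, ⟨ha, hE.le_iff_le.1 hcb⟩, rfl⟩
    · rintro ⟨a, ⟨ha, hab⟩, rfl⟩
      exact ⟨Finset.mem_image_of_mem E ha, hE.monotone hab⟩
  simp only [rfun, Finset.sup_image, Function.comp_def, hbelow, Set.image_image, rho_range hE]

theorem le_sparsity_univ_iff {D : ℕ} :
    (D : ℕ∞) ≤ sparsity Set.univ e s ↔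
      ∀ a ∈ s ∪ {e}, ∀ b ∈ s ∪ {e}, a < b → a + D ≤ b := by
  simp only [sparsity, le_iInf_iff, Nat.cast_le]
  constructor
  · intro h a ha b hb hab
    have := rho_univ_of_le hab.le ▸ h a ha b hb hab.ne
    omega
  · intro h a ha b hb hab
    rcases hab.lt_or_gt with hlt | hlt
    · have := h a ha b hb hlt
      rw [rho_univ_of_le hlt.le]
      omega
    · have := h b hb a ha hlt
      rw [rho_comm, rho_univ_of_le hlt.le]
      omega

theorem le_sparsity_univ_image_succ {Z : ℕ → ℕ} {D : ℕ} (hZ : ∀ m, Z m + D ≤ Z (m + 1))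
    (q : Finset ℕ) : (D : ℕ∞) ≤ sparsity Set.univ (Z 0) (q.image fun m => Z (m + 1)) := by
  have hmono : Monotone Z := monotone_nat_of_le_succ fun m => (Nat.le_add_right _ D).trans (hZ m)
  have exists_eq {b : ℕ} (hb : b ∈ q.image (fun m => Z (m + 1)) ∪ {Z 0}) : ∃ m, Z m = b := by
    rcases Finset.mem_union.1 hb with hb | hb
    · obtain ⟨m, -, rfl⟩ := Finset.mem_image.1 hb
      exact ⟨m + 1, rfl⟩
    · exact ⟨0, (Finset.mem_singleton.1 hb).symm⟩
  refine le_sparsity_univ_iff.2 fun b hb c hc hbc => ?_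
  obtain ⟨i, rfl⟩ := exists_eq hb
  obtain ⟨j, rfl⟩ := exists_eq hc
  exact (hZ i).trans (hmono (hmono.reflect_lt hbc))

theorem rfun_le (h : ∀ b ∈ y, ∃ a ∈ x ∪ {e}, a ≤ b ∧ rho X a b ≤ r) : rfun X e x y ≤ r := by
  refine Finset.sup_le fun b hb => ?_
  obtain ⟨a, ha, hab, hr⟩ := h b hb
  exact le_trans (Nat.sInf_le ⟨a, ⟨ha, hab⟩, rfl⟩) hr

end Rho

section GapFill

/-- The positions `Z 0 < Z 1 < ⋯` used to interleave `x` with new points. The sequence `a` lists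
`x⁺`. The term `Z 0` stands for `e`, and `Z (m + 1)` for `z_[m]`: this is the next term of `a` if
`m ∈ p`, and the point `D` above the preceding position otherwise. -/
def gapFill (p : Finset ℕ) (a : ℕ → ℕ) (D : ℕ) : ℕ → ℕ
  | 0 => a 0
  | m + 1 => if m ∈ p then a (Nat.count (· ∈ p) m + 1) else gapFill p a D m + D

variable {p : Finset ℕ} {m : ℕ}

theorem count_mem_le_card (p : Finset ℕ) (m : ℕ) : Nat.count (· ∈ p) m ≤ p.card := by
  rw [Nat.count_eq_card_filter_range]
  exact Finset.card_le_card fun k hk => (Finset.mem_filter.1 hk).2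

theorem count_mem_lt_card (hm : m ∈ p) : Nat.count (· ∈ p) m < p.card :=
  (Nat.count_strict_mono hm m.lt_succ_self).trans_le (count_mem_le_card p _)

theorem image_count_mem (p : Finset ℕ) :
    p.image (Nat.count (· ∈ p)) = Finset.range p.card := by
  have hinj : Set.InjOn (Nat.count (· ∈ p)) p := fun i hi j hj h => Nat.count_injective hi hj h
  refine Finset.eq_of_subset_of_card_le
    (Finset.image_subset_iff.2 fun m hm => Finset.mem_range.2 (count_mem_lt_card hm)) ?_
  rw [Finset.card_image_of_injOn hinj, Finset.card_range]

theorem count_notMem_le {N : ℕ} (hp : p ⊆ Finset.range N) (hm : m ≤ N) :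
    Nat.count (· ∉ p) m ≤ N - p.card := by
  rw [Nat.count_eq_card_filter_range, ← Finset.card_range N, ← Finset.card_sdiff_of_subset hp]
  refine Finset.card_le_card fun k hk => ?_
  obtain ⟨hkm, hkp⟩ := Finset.mem_filter.1 hk
  exact Finset.mem_sdiff.2 ⟨Finset.range_mono hm hkm, hkp⟩

variable {a : ℕ → ℕ} {D w : ℕ}

theorem gapFill_succ_of_mem (hm : m ∈ p) :
    gapFill p a D (m + 1) = a (Nat.count (· ∈ p) m + 1) :=
  if_pos hm

theorem gapFill_succ_of_notMem (hm : m ∉ p) : gapFill p a D (m + 1) = gapFill p a D m + D :=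
  if_neg hm

theorem image_gapFill_succ (p : Finset ℕ) (a : ℕ → ℕ) (D : ℕ) :
    p.image (fun m => gapFill p a D (m + 1)) =
      (Finset.range p.card).image (fun k => a (k + 1)) := by
  rw [← image_count_mem, Finset.image_image]
  exact Finset.image_congr fun m hm => gapFill_succ_of_mem hm

theorem le_gapFill (p : Finset ℕ) (a : ℕ → ℕ) (D m : ℕ) :
    a (Nat.count (· ∈ p) m) ≤ gapFill p a D m := by
  induction m with
  | zero => simp [gapFill]
  | succ m ih =>
    by_cases hm : m ∈ p
    · simp [gapFill_succ_of_mem hm, Nat.count_succ, hm]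
    · simpa [gapFill_succ_of_notMem hm, Nat.count_succ, hm] using ih.trans (Nat.le_add_right _ D)

theorem gapFill_le (p : Finset ℕ) (a : ℕ → ℕ) (D m : ℕ) :
    gapFill p a D m ≤ a (Nat.count (· ∈ p) m) + Nat.count (· ∉ p) m * D := by
  induction m with
  | zero => simp [gapFill]
  | succ m ih =>
    by_cases hm : m ∈ p
    · simp [gapFill_succ_of_mem hm, Nat.count_succ, hm]
    · simpa [gapFill_succ_of_notMem hm, Nat.count_succ, hm, add_mul, ← add_assoc] using ih

theorem gapFill_add_le_succ (hw : ∀ m ∈ p, Nat.count (· ∉ p) m ≤ w)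
    (ha : ∀ k < p.card, a k + (w + 1) * D ≤ a (k + 1)) (m : ℕ) :
    gapFill p a D m + D ≤ gapFill p a D (m + 1) := by
  by_cases hm : m ∈ p
  · rw [gapFill_succ_of_mem hm]
    calc gapFill p a D m + D
        ≤ a (Nat.count (· ∈ p) m) + Nat.count (· ∉ p) m * D + D := by
          gcongr
          exact gapFill_le p a D m
      _ ≤ a (Nat.count (· ∈ p) m) + w * D + D := by
          gcongr
          exact hw m hm
      _ = a (Nat.count (· ∈ p) m) + (w + 1) * D := by ring
      _ ≤ a (Nat.count (· ∈ p) m + 1) := ha _ (count_mem_lt_card hm)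
  · rw [gapFill_succ_of_notMem hm]

end GapFill

theorem exists_arrow_univ {n D : ℕ} (hD : 0 < D) {s : Finset ℕ} (hs0 : 0 ∉ s) (hsn : s.card = n)
    (hs : (((n + 1) * D : ℕ) : ℕ∞) ≤ sparsity Set.univ 0 s) {p q : Finset ℕ}
    (hp : p ∈ idx n) (hq : q ∈ idx n) :
    ∃ t : Finset ℕ, 0 ∉ t ∧ t.card = n ∧ (D : ℕ∞) ≤ sparsity Set.univ 0 t ∧
      rfun Set.univ 0 s t ≤ n * D ∧ Arrow Set.univ n p q s t := by
  obtain ⟨hp, hpn⟩ := Finset.mem_powersetCard.1 hp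
  obtain ⟨hq, hqn⟩ := Finset.mem_powersetCard.1 hq
  have hcard : (s ∪ {0}).card = n + 1 := by
    rw [Finset.card_union_of_disjoint (Finset.disjoint_singleton_right.2 hs0), hsn,
      Finset.card_singleton]
  set a := nth (s ∪ {0})
  have ha_mem {k : ℕ} (hk : k ≤ n) : a k ∈ s ∪ {0} := nth_mem (by omega)
  have ha_gap : ∀ k < p.card, a k + (n + 1) * D ≤ a (k + 1) := fun k hk =>
    le_sparsity_univ_iff.1 hs _ (ha_mem (by omega)) _ (ha_mem (by omega))
      (nth_lt_nth k.lt_succ_self (by omega))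
  have hfree {m : ℕ} (hm : m ≤ 2 * n) : Nat.count (· ∉ p) m ≤ n :=
    (count_notMem_le hp hm).trans (by omega)
  set Z := gapFill p a D
  have hZ0 : Z 0 = 0 := nth_zero_of_zero_mem (by simp)
  have hZ_gap (m : ℕ) : Z m + D ≤ Z (m + 1) :=
    gapFill_add_le_succ (fun m hm => hfree (Finset.mem_range.1 (hp hm)).le) ha_gap m
  have hZ : StrictMono Z := strictMono_nat_of_lt_succ fun m => by have := hZ_gap m; omega
  have hz : StrictMono fun m => Z (m + 1) := hZ.comp (strictMono_id.add_const 1)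
  have hps : p.image (fun m => Z (m + 1)) = s := by
    rw [image_gapFill_succ, hpn, ← hsn, image_nth_succ_union_zero hs0]
  refine ⟨q.image fun m => Z (m + 1), ?_, ?_, ?_, ?_, ?_⟩
  · intro h
    obtain ⟨m, -, hm⟩ := Finset.mem_image.1 h
    exact (hZ m.succ_pos).ne (hZ0.trans hm.symm)
  · rw [Finset.card_image_of_injective _ hz.injective, hqn]
  · exact hZ0 ▸ le_sparsity_univ_image_succ hZ_gap q
  · refine rfun_le (Finset.forall_mem_image.2 fun m hm => ?_)
    have hle := le_gapFill p a D (m + 1)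
    refine ⟨_, ha_mem (hpn ▸ count_mem_le_card p (m + 1)), hle, ?_⟩
    rw [rho_univ_of_le hle, Nat.sub_le_iff_le_add']
    refine (gapFill_le p a D (m + 1)).trans ?_
    gcongr
    exact hfree (Finset.mem_range.1 (hq hm))
  · exact hps ▸ (arrow_univ_self hp hq).image hz (Set.mapsTo_univ _ _) hp hq

theorem stmt_7_general {n D : ℕ} (hD : 0 < D) {X : Set ℕ} (hX : X.Infinite) {e : ℕ}
    (he : e = sInf X) {x : Finset ℕ} (hx : ↑x ⊆ X \ {e}) (hxc : x.card = n)
    (hd : (((n + 1) * D : ℕ) : ℕ∞) ≤ sparsity X e x) {p q : Finset ℕ}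
    (hp : p ∈ idx n) (hq : q ∈ idx n) :
    ∃ y : Finset ℕ, ↑y ⊆ X \ {e} ∧ y.card = n ∧ (D : ℕ∞) ≤ sparsity X e y ∧
      rfun X e x y ≤ n * D ∧ Arrow X n p q x y := by
  obtain ⟨E, hE, rfl, rfl⟩ : ∃ E : ℕ → ℕ, StrictMono E ∧ Set.range E = X ∧ E 0 = e :=
    ⟨Nat.nth (· ∈ X), Nat.nth_strictMono hX, Nat.range_nth_of_infinite hX, he ▸ Nat.nth_zero⟩
  have hpunctured : Set.range E \ {E 0} = E '' {0}ᶜ := by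
    rw [Set.image_compl_eq_range_sdiff_image hE.injective, Set.image_singleton]
  rw [hpunctured] at hx ⊢
  obtain ⟨s, hs0, rfl⟩ := Finset.subset_set_image_iff.1 hx
  rw [Finset.card_image_of_injective _ hE.injective] at hxc
  rw [sparsity_range hE] at hd
  obtain ⟨t, ht0, htn, htD, hr, harrow⟩ :=
    exists_arrow_univ hD (Finset.mem_coe.not.1 fun h => hs0 h rfl) hxc hd hp hq
  refine ⟨t.image E, ?_, ?_, ?_, ?_, ?_⟩
  · exact Finset.subset_set_image_iff.2 ⟨t, Set.subset_compl_singleton_iff.2 ht0, rfl⟩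
  · rwa [Finset.card_image_of_injective _ hE.injective]
  · rwa [sparsity_range hE]
  · rwa [rfun_range hE]
  · exact harrow.image hE (fun i _ => Set.mem_range_self i) (Finset.mem_powersetCard.1 hp).1
      (Finset.mem_powersetCard.1 hq).1

/-- for `l ≥ 1`, `x ∈ [X⁻]^n` with `d(x) ≥ n^{2l}`, and `p, q ∈ [2n]^n`,
there is `y ∈ [X⁻]^n` with `d(y) ≥ n^{2l-2}`, `r(x,y) ≤ n^{2l-1}`, and `x →_{pq} y`. -/
theorem stmt_7 (n : ℕ) (hn : 2 ≤ n) (X : Set ℕ) (hX : X.Infinite) (e : ℕ) (he : e = sInf X)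
    (l : ℕ) (hl : 1 ≤ l)
    (x : Finset ℕ) (hx : ↑x ⊆ X \ {e}) (hxc : x.card = n)
    (hd : ((n ^ (2 * l) : ℕ) : ℕ∞) ≤ sparsity X e x)
    (p q : Finset ℕ) (hp : p ∈ idx n) (hq : q ∈ idx n) :
    ∃ y : Finset ℕ, ↑y ⊆ X \ {e} ∧ y.card = n ∧
      ((n ^ (2 * l - 2) : ℕ) : ℕ∞) ≤ sparsity X e y ∧
      rfun X e x y ≤ n ^ (2 * l - 1) ∧
      Arrow X n p q x y := by
  have hlow : n ^ (2 * l - 1) = n * n ^ (2 * l - 2) := by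
    rw [← pow_succ']; congr 1; omega
  have hhigh : (n + 1) * n ^ (2 * l - 2) ≤ n ^ (2 * l) :=
    calc (n + 1) * n ^ (2 * l - 2) ≤ n ^ 2 * n ^ (2 * l - 2) :=
          Nat.mul_le_mul_right _ (by nlinarith)
      _ = n ^ (2 * l) := by rw [← pow_add]; congr 1; omega
  rw [hlow]
  exact stmt_7_general (by positivity) hX he hx hxc ((Nat.cast_le.2 hhigh).trans hd) hp hq
end
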